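/- arXiv:2107.14670 — 4 statements merged into one kernel-verified Lean document; each statement's English description precedes it below -/
import Mathlib

section
/- The directional derivative of the special lagrangian angle Θ at a symmetric matrix A in the direction of a symmetric matrix B is given by DΘ(A)·B = Tr((Id + A²)⁻¹ B). -/
/-- The special lagrangian angle of a real symmetric matrix: the sum of the arctangents of its
eigenvalues. -/
noncomputable def slAngle {d : ℕ} (A : Matrix (Fin d) (Fin d) ℝ) : ℝ :=
  if h : A.IsHermitian then ∑ i, Real.arctan (h.eigenvalues i) else 0

/-- For a fixed continuous function, the continuous functional calculus of a continuous family of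
Hermitian matrices is continuous. -/
theorem Matrix.continuous_cfc_of_isHermitian {X n : Type*} [TopologicalSpace X] [Fintype n]
    [DecidableEq n] {f : ℝ → ℝ} (hf : Continuous f) {a : X → Matrix n n ℂ} (ha : Continuous a)
    (ha' : ∀ x, (a x).IsHermitian) : Continuous fun x => cfc f (a x) := by
  open scoped Matrix.Norms.L2Operator in
  let : CStarAlgebra (Matrix n n ℂ) :=
    { (inferInstance : NormedRing (Matrix n n ℂ)), (inferInstance : StarRing (Matrix n n ℂ)),
      (inferInstance : NormedAlgebra ℂ (Matrix n n ℂ)),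
      (inferInstance : CStarRing (Matrix n n ℂ)), (inferInstance : StarModule ℂ (Matrix n n ℂ)) with
      complete := (FiniteDimensional.complete ℂ (Matrix n n ℂ)).complete }
  exact ha.cfc_of_mem_nhdsSet (s := Set.univ) f Filter.univ_mem (fun x => ha' x) hf.continuousOn

theorem Matrix.IsHermitian.trace_cfc {n 𝕜 : Type*} [RCLike 𝕜] [Fintype n] [DecidableEq n]
    {A : Matrix n n 𝕜} (hA : A.IsHermitian) (f : ℝ → ℝ) :
    (cfc f A).trace = ((∑ i, f (hA.eigenvalues i) : ℝ) : 𝕜) := by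
  rw [hA.cfc_eq, Matrix.IsHermitian.cfc, Unitary.conjStarAlgAut_apply, Matrix.trace_mul_comm,
    ← mul_assoc]
  simp [Matrix.trace]

theorem Matrix.IsHermitian.map_ofReal {n : Type*} {A : Matrix n n ℝ} (hA : A.IsHermitian) :
    (A.map Complex.ofReal).IsHermitian :=
  hA.map _ fun x => (Complex.conj_ofReal x).symm

theorem Matrix.IsHermitian.eigenvalues_map_ofReal {n : Type*} [Fintype n] [DecidableEq n]
    {A : Matrix n n ℝ} (hA : A.IsHermitian) :
    hA.map_ofReal.eigenvalues = hA.eigenvalues := by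
  have key : (A.map Complex.ofReal).charpoly = A.charpoly.map Complex.ofRealHom :=
    Matrix.charpoly_map A Complex.ofRealHom
  have hr := hA.map_ofReal.sort_roots_charpoly_eq_eigenvalues₀
  have hs := hA.sort_roots_charpoly_eq_eigenvalues₀
  rw [key, hA.splits_charpoly.roots_map, Multiset.map_map] at hr
  have : hA.map_ofReal.eigenvalues₀ = hA.eigenvalues₀ := by
    rw [← List.ofFn_inj, ← hr, ← hs]
    rfl
  unfold Matrix.IsHermitian.eigenvalues
  rw [this]

theorem continuous_slAngle_comp {X : Type*} [TopologicalSpace X] {d : ℕ}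
    {a : X → Matrix (Fin d) (Fin d) ℝ} (ha : Continuous a) (ha' : ∀ x, (a x).IsHermitian) :
    Continuous fun x => slAngle (a x) := by
  have hc : Continuous fun x => (a x).map Complex.ofReal :=
    ha.matrix_map Complex.continuous_ofReal
  have h := Complex.continuous_re.comp (Matrix.continuous_cfc_of_isHermitian
    Real.continuous_arctan hc fun x => (ha' x).map_ofReal).matrix_trace
  convert h using 2 with x
  rw [slAngle, dif_pos (ha' x)]
  simp [(ha' x).map_ofReal.trace_cfc, (ha' x).eigenvalues_map_ofReal,
    -Complex.ofReal_sum, -Complex.ofReal_arctan]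

theorem Complex.one_add_I_mul_ofReal (x : ℝ) :
    1 + I * x = (√(1 + x ^ 2) : ℝ) * exp (Real.arctan x * I) := by
  have h : √(1 + x ^ 2) ≠ 0 := by positivity
  rw [Complex.exp_mul_I, ← Complex.ofReal_cos, ← Complex.ofReal_sin, Real.cos_arctan,
    Real.sin_arctan, mul_add, ← mul_assoc, ← Complex.ofReal_mul, ← Complex.ofReal_mul,
    mul_one_div_cancel h, mul_div_cancel₀ _ h]
  push_cast
  ring

/-- The special lagrangian angle is an argument of `det (1 + iA)`. -/
theorem exists_det_one_add_I_smul_eq {d : ℕ} {A : Matrix (Fin d) (Fin d) ℝ}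
    (hA : A.IsHermitian) :
    ∃ r : ℝ, 0 < r ∧
      (1 + Complex.I • A.map Complex.ofReal).det = r * Complex.exp (slAngle A * Complex.I) := by
  refine ⟨∏ i, √(1 + hA.eigenvalues i ^ 2), Finset.prod_pos fun i _ => by positivity, ?_⟩
  have h1 : 1 + Complex.I • A.map Complex.ofReal
      = (-Complex.I) • (Matrix.scalar (Fin d) Complex.I - A.map Complex.ofReal) := by
    rw [smul_sub, neg_smul, neg_smul, sub_neg_eq_add, Matrix.scalar_apply,
      ← Matrix.smul_one_eq_diagonal,
      smul_smul, Complex.I_mul_I, neg_smul, one_smul, neg_neg]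
  have h2 : ∀ i, -Complex.I * (Complex.I - (hA.eigenvalues i : ℂ))
      = (√(1 + hA.eigenvalues i ^ 2) : ℝ)
        * Complex.exp (Real.arctan (hA.eigenvalues i) * Complex.I) := fun i => by
    rw [← Complex.one_add_I_mul_ofReal]
    linear_combination -Complex.I_mul_I
  rw [h1, Matrix.det_smul, ← Matrix.eval_charpoly, hA.map_ofReal.charpoly_eq,
    hA.eigenvalues_map_ofReal, Polynomial.eval_prod, ← Finset.card_univ, ← Finset.prod_const,
    ← Finset.prod_mul_distrib]
  simp only [Polynomial.eval_sub, Polynomial.eval_X, Polynomial.eval_C]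
  rw [slAngle, dif_pos hA, Complex.ofReal_prod, Complex.ofReal_sum, Finset.sum_mul,
    Complex.exp_sum, ← Finset.prod_mul_distrib]
  exact Finset.prod_congr rfl fun i _ => h2 i

theorem Matrix.hasDerivAt_det_one_add_smul {n 𝕜 : Type*} [NontriviallyNormedField 𝕜] [Fintype n]
    [DecidableEq n] (M : Matrix n n 𝕜) :
    HasDerivAt (fun t : 𝕜 => (1 + t • M).det) M.trace 0 := by
  have h := (Matrix.det (1 + (Polynomial.X : Polynomial 𝕜) • M.map Polynomial.C)).hasDerivAt 0
  rw [Matrix.derivative_det_one_add_X_smul] at h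
  convert h using 2 with t
  simp [eval_det, ← Matrix.smul_eq_mul_diagonal]

theorem Matrix.isUnit_det_one_add_mul_self {n : Type*} [Fintype n] [DecidableEq n]
    {A : Matrix n n ℝ} (hA : A.IsSymm) : IsUnit (1 + A * A).det := by
  have h : (A * A).PosSemidef := by
    have := Matrix.posSemidef_conjTranspose_mul_self A
    rwa [Matrix.conjTranspose_eq_transpose_of_trivial, hA.eq] at this
  exact (Matrix.PosDef.one.add_posSemidef h).det_pos.ne'.isUnit

/-- The directional derivative of the special lagrangian angle Θ at a symmetric matrix A in the
direction of a symmetric matrix B is DΘ(A)·B = Tr((Id + A²)⁻¹ B). -/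
theorem slAngle_directional_deriv {d : ℕ} (A B : Matrix (Fin d) (Fin d) ℝ)
    (hA : A.IsSymm) (hB : B.IsSymm) :
    HasDerivAt (fun t : ℝ => slAngle (A + t • B))
      (Matrix.trace ((1 + A * A)⁻¹ * B)) 0 := by
  have hH : ∀ t : ℝ, (A + t • B).IsHermitian := fun t => by
    rw [Matrix.IsHermitian, Matrix.conjTranspose_eq_transpose_of_trivial]
    exact hA.add (hB.smul t)
  have hcont : Continuous fun t : ℝ => slAngle (A + t • B) :=
    continuous_slAngle_comp (by fun_prop) hH
  set S := (1 + A * A)⁻¹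
  have hSmul : (1 + A * A) * S = 1 :=
    Matrix.mul_nonsing_inv _ (Matrix.isUnit_det_one_add_mul_self hA)
  let c : Matrix (Fin d) (Fin d) ℝ →+* Matrix (Fin d) (Fin d) ℂ := Complex.ofRealHom.mapMatrix
  have hctrace : ∀ N, (c N).trace = (N.trace : ℂ) := fun N =>
    (AddMonoidHom.map_trace Complex.ofRealHom N).symm
  have hcsmul : ∀ (t : ℝ) N, c (t • N) = (t : ℂ) • c N := fun t N => by
    ext i j
    simp [c]
  let P : Matrix (Fin d) (Fin d) ℂ := (1 - Complex.I • c A) * c S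
  let M : Matrix (Fin d) (Fin d) ℂ := P * (Complex.I • c B)
  have hP : (1 + Complex.I • c A) * P = 1 := by
    have : (1 + Complex.I • c A) * (1 - Complex.I • c A) = c (1 + A * A) := by
      rw [map_add, map_one, map_mul, add_mul, mul_sub, mul_sub, smul_mul_smul_comm,
        Complex.I_mul_I, mul_one, one_mul, mul_one, neg_smul, one_smul]
      abel
    rw [← mul_assoc, this, ← map_mul, hSmul, map_one]
  have hM : M.trace = Complex.I * ((S * B).trace : ℂ) + ((A * (S * B)).trace : ℂ) := by
    have : M = Complex.I • c (S * B) + c (A * (S * B)) := by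
      simp only [M, P, map_mul, sub_mul, one_mul, mul_smul_comm, smul_mul_assoc, smul_smul,
        Complex.I_mul_I, smul_sub, mul_assoc]
      simp
    rw [this, Matrix.trace_add, Matrix.trace_smul, hctrace, hctrace, smul_eq_mul]
  have hfac : ∀ t : ℝ, (1 + Complex.I • c (A + t • B)).det
      = (1 + Complex.I • c A).det * (1 + (t : ℂ) • M).det := fun t => by
    rw [← Matrix.det_mul, mul_add, mul_one, mul_smul_comm, ← mul_assoc, hP, one_mul, map_add,
      hcsmul, smul_add, smul_comm, add_assoc]
  have hG : HasDerivAt (fun t : ℝ => (1 + (t : ℂ) • M).det) M.trace 0 := by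
    have := Matrix.hasDerivAt_det_one_add_smul M
    rw [← Complex.ofReal_zero] at this
    exact this.comp_ofReal
  have hlog : HasDerivAt (fun t : ℝ => (1 + (t : ℂ) • M).det.arg) M.trace.im 0 := by
    have := Complex.imCLM.hasFDerivAt.comp_hasDerivAt (0 : ℝ) (hG.clog_real (by simp))
    simpa [Function.comp_def, Complex.log_im] using this
  have hev : ∀ᶠ t : ℝ in nhds 0,
      slAngle (A + t • B) - slAngle A ∈ Set.Ioo (-Real.pi) Real.pi := by
    refine (hcont.sub continuous_const).continuousAt.eventually_mem (Ioo_mem_nhds ?_ ?_) <;>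
      simp [Real.pi_pos]
  have heq : ∀ᶠ t : ℝ in nhds 0,
      slAngle (A + t • B) = (1 + (t : ℂ) • M).det.arg + slAngle A := by
    filter_upwards [hev] with t ht
    have hA' : A.IsHermitian := by simpa using hH 0
    obtain ⟨r, hr, hrA⟩ := exists_det_one_add_I_smul_eq hA'
    obtain ⟨r', hr', hrt⟩ := exists_det_one_add_I_smul_eq (hH t)
    have hdet_eq := hfac t
    change _ = (1 + Complex.I • A.map Complex.ofReal).det * _ at hdet_eq
    change (1 + Complex.I • (A + t • B).map Complex.ofReal).det = _ at hdet_eq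
    rw [hrA, hrt] at hdet_eq
    have hdet : (1 + (t : ℂ) • M).det
        = (r' / r : ℝ) * Complex.exp ((slAngle (A + t • B) - slAngle A : ℝ) * Complex.I) := by
      have hr0 : (r : ℂ) ≠ 0 := by exact_mod_cast hr.ne'
      rw [Complex.ofReal_sub, sub_mul, Complex.exp_sub, Complex.ofReal_div,
        div_mul_div_comm, eq_div_iff (mul_ne_zero hr0 (Complex.exp_ne_zero _))]
      linear_combination -hdet_eq
    rw [hdet, Complex.exp_mul_I, Complex.arg_mul_cos_add_sin_mul_I (div_pos hr' hr)
      (Set.Ioo_subset_Ioc_self ht), sub_add_cancel]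
  have him : M.trace.im = (S * B).trace := by simp [hM]
  rw [← him]
  exact (hlog.add_const _).congr_of_eventuallyEq heq
end

section
/- The second derivative of the special lagrangian angle satisfies D²Θ(A)(B,B) = −2 Tr((Id + A²)⁻¹ A B (Id + A²)⁻¹ B) for symmetric matrices A, B; consequently Θ is strictly concave on the open cone of positive definite symmetric matrices. -/
open Matrix Finset in
theorem trace_conj_diagonal_mul_conj_diagonal {d : ℕ} (U V : Matrix (Fin d) (Fin d) ℝ)
    (p q : Fin d → ℝ) :
    trace (U * diagonal p * Uᵀ * (V * diagonal q * Vᵀ)) =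
      ∑ i, ∑ j, (Uᵀ * V) i j ^ 2 * (p i * q j) := by
  have h : trace (U * diagonal p * Uᵀ * (V * diagonal q * Vᵀ)) =
      trace (diagonal p * (Uᵀ * V) * (diagonal q * (Uᵀ * V)ᵀ)) := by
    rw [trace_mul_comm (diagonal p * (Uᵀ * V)), transpose_mul, transpose_transpose,
      show U * diagonal p * Uᵀ * (V * diagonal q * Vᵀ) =
        (U * diagonal p * Uᵀ * V * diagonal q) * Vᵀ by simp only [Matrix.mul_assoc],
      trace_mul_comm, show Vᵀ * (U * diagonal p * Uᵀ * V * diagonal q) =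
        (Vᵀ * U * diagonal p * Uᵀ * V) * diagonal q by simp only [Matrix.mul_assoc],
      trace_mul_comm]
    simp only [Matrix.mul_assoc]
  rw [h]
  simp only [trace, diag_apply, Matrix.mul_apply (M := diagonal p * (Uᵀ * V)), diagonal_mul,
    transpose_apply]
  exact sum_congr rfl fun i _ => sum_congr rfl fun j _ => by ring

open Matrix in
theorem exists_orthogonal_diagonalization {d : ℕ} {A : Matrix (Fin d) (Fin d) ℝ}
    (hA : A.IsHermitian) :
    ∃ U : Matrix (Fin d) (Fin d) ℝ, Uᵀ * U = 1 ∧ U * Uᵀ = 1 ∧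
      A = U * diagonal hA.eigenvalues * Uᵀ := by
  refine ⟨hA.eigenvectorUnitary, ?_, ?_, ?_⟩
  · have := Unitary.coe_star_mul_self hA.eigenvectorUnitary
    rwa [star_eq_conjTranspose, conjTranspose_eq_transpose_of_trivial] at this
  · have := Unitary.coe_mul_star_self hA.eigenvectorUnitary
    rwa [Unitary.coe_star, star_eq_conjTranspose, conjTranspose_eq_transpose_of_trivial] at this
  · have := hA.spectral_theorem
    rw [Unitary.conjStarAlgAut_apply, star_eq_conjTranspose,
      conjTranspose_eq_transpose_of_trivial] at this
    exact this

theorem det_one_add_sq_ne_zero {d : ℕ} {A : Matrix (Fin d) (Fin d) ℝ} (hA : A.IsHermitian) :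
    (1 + A * A).det ≠ 0 := by
  have h : (A * A).PosSemidef := by
    have := Matrix.posSemidef_conjTranspose_mul_self A
    rwa [hA.eq] at this
  exact (Matrix.PosDef.one.add_posSemidef h).det_pos.ne'

open Matrix Finset in
/-- The first-order Taylor remainder of `slAngle` at `B` is a nonnegative combination of the scalar
remainders of `arctan`, with the weights that express `Tr (A - B)²`. -/
theorem exists_weights_slAngle_sub {d : ℕ} {A B : Matrix (Fin d) (Fin d) ℝ}
    (hA : A.IsHermitian) (hB : B.IsHermitian) :
    ∃ w : Fin d → Fin d → ℝ, (∀ i j, 0 ≤ w i j) ∧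
      slAngle A - slAngle B - trace ((1 + B * B)⁻¹ * (A - B)) =
        ∑ i, ∑ j, w i j * (Real.arctan (hA.eigenvalues i) - Real.arctan (hB.eigenvalues j) -
          (hA.eigenvalues i - hB.eigenvalues j) / (1 + hB.eigenvalues j ^ 2)) ∧
      trace ((A - B) * (A - B)) =
        ∑ i, ∑ j, w i j * (hA.eigenvalues i - hB.eigenvalues j) ^ 2 := by
  obtain ⟨U, hU, hU', hAU⟩ := exists_orthogonal_diagonalization hA
  obtain ⟨V, hV, hV', hBV⟩ := exists_orthogonal_diagonalization hB
  have hsA : slAngle A = ∑ i, Real.arctan (hA.eigenvalues i) := dif_pos hA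
  have hsB : slAngle B = ∑ i, Real.arctan (hB.eigenvalues i) := dif_pos hB
  set a := hA.eigenvalues
  set b := hB.eigenvalues
  have key := trace_conj_diagonal_mul_conj_diagonal U V
  have mulD : ∀ (W : Matrix (Fin d) (Fin d) ℝ), Wᵀ * W = 1 → ∀ p q : Fin d → ℝ,
      W * diagonal p * Wᵀ * (W * diagonal q * Wᵀ) = W * diagonal (fun i => p i * q i) * Wᵀ := by
    intro W hW p q
    rw [show W * diagonal p * Wᵀ * (W * diagonal q * Wᵀ) =
      W * diagonal p * (Wᵀ * W) * diagonal q * Wᵀ by simp only [Matrix.mul_assoc], hW,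
      Matrix.mul_one, Matrix.mul_assoc W, diagonal_mul_diagonal]
  have oneU : U * diagonal (fun _ => (1 : ℝ)) * Uᵀ = 1 := by simp [hU']
  have oneV : V * diagonal (fun _ => (1 : ℝ)) * Vᵀ = 1 := by simp [hV']
  have trD : ∀ (W : Matrix (Fin d) (Fin d) ℝ), Wᵀ * W = 1 → ∀ p : Fin d → ℝ,
      trace (W * diagonal p * Wᵀ) = ∑ i, p i := by
    intro W hW p
    rw [trace_mul_comm, ← Matrix.mul_assoc, hW, Matrix.one_mul, trace_diagonal]
  have left : ∀ p : Fin d → ℝ, ∑ i, p i = ∑ i, ∑ j, (Uᵀ * V) i j ^ 2 * (p i * 1) := by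
    intro p
    rw [← key p (fun _ => 1), oneV, Matrix.mul_one, trD U hU]
  have right : ∀ q : Fin d → ℝ, ∑ i, q i = ∑ i, ∑ j, (Uᵀ * V) i j ^ 2 * (1 * q j) := by
    intro q
    rw [← key (fun _ => 1) q, oneU, Matrix.one_mul, trD V hV]
  have hinv : (1 + B * B)⁻¹ = V * diagonal (fun j => (1 + b j ^ 2)⁻¹) * Vᵀ := by
    apply inv_eq_left_inv
    have h1 : 1 + B * B = V * diagonal (fun j => 1 + b j ^ 2) * Vᵀ := by
      conv_lhs => rw [hBV, mulD V hV, ← oneV]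
      rw [← Matrix.add_mul, ← Matrix.mul_add, diagonal_add]
      simp only [pow_two]
    rw [h1, mulD V hV, ← oneV]
    congr 3
    funext j
    exact inv_mul_cancel₀ (by positivity)
  refine ⟨fun i j => (Uᵀ * V) i j ^ 2, fun i j => sq_nonneg _, ?_, ?_⟩
  · have h1 : trace ((1 + B * B)⁻¹ * A) =
        ∑ i, ∑ j, (Uᵀ * V) i j ^ 2 * (a i * (1 + b j ^ 2)⁻¹) := by
      rw [trace_mul_comm, hinv]
      conv_lhs => rw [hAU]
      exact key _ _
    have h2 : trace ((1 + B * B)⁻¹ * B) =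
        ∑ i, ∑ j, (Uᵀ * V) i j ^ 2 * (1 * ((1 + b j ^ 2)⁻¹ * b j)) := by
      rw [hinv]
      conv_lhs => rw [hBV]
      rw [mulD V hV, trD V hV, right]
    rw [Matrix.mul_sub, trace_sub, h1, h2, hsA, hsB, left fun i => Real.arctan (a i),
      right fun i => Real.arctan (b i)]
    simp only [← sum_sub_distrib]
    exact sum_congr rfl fun i _ => sum_congr rfl fun j _ => by ring
  · have h1 : trace (A * A) = ∑ i, ∑ j, (Uᵀ * V) i j ^ 2 * (a i * a i * 1) := by
      conv_lhs => rw [hAU]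
      rw [mulD U hU, trD U hU, left]
    have h2 : trace (B * B) = ∑ i, ∑ j, (Uᵀ * V) i j ^ 2 * (1 * (b j * b j)) := by
      conv_lhs => rw [hBV]
      rw [mulD V hV, trD V hV, right]
    have h3 : trace (A * B) = ∑ i, ∑ j, (Uᵀ * V) i j ^ 2 * (a i * b j) := by
      conv_lhs => rw [hAU, hBV]
      exact key _ _
    rw [show (A - B) * (A - B) = A * A - A * B - B * A + B * B by noncomm_ring, trace_add,
      trace_sub, trace_sub, trace_mul_comm B A, h1, h2, h3]
    simp only [← sum_sub_distrib, ← sum_add_distrib]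
    exact sum_congr rfl fun i _ => sum_congr rfl fun j _ => by ring

theorem exists_arctan_sub_eq {a b : ℝ} (h : a ≠ b) :
    ∃ c ∈ Set.Ioo (min a b) (max a b),
      Real.arctan a - Real.arctan b = (a - b) / (1 + c ^ 2) := by
  have mvt : ∀ {x y : ℝ}, x < y → ∃ c ∈ Set.Ioo x y,
      Real.arctan y - Real.arctan x = (y - x) / (1 + c ^ 2) := by
    intro x y hxy
    obtain ⟨c, hc, hc'⟩ := exists_hasDerivAt_eq_slope Real.arctan (fun x => 1 / (1 + x ^ 2)) hxy
      Real.continuous_arctan.continuousOn fun x _ => Real.hasDerivAt_arctan x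
    refine ⟨c, hc, ?_⟩
    rw [eq_div_iff (sub_pos.2 hxy).ne'] at hc'
    rw [← hc']
    ring
  rcases h.lt_or_gt with h | h
  · obtain ⟨c, hc, hc'⟩ := mvt h
    refine ⟨c, by rwa [min_eq_left h.le, max_eq_right h.le], ?_⟩
    rw [← neg_sub, hc']
    ring
  · obtain ⟨c, hc, hc'⟩ := mvt h
    exact ⟨c, by rwa [min_eq_right h.le, max_eq_left h.le], hc'⟩

theorem abs_arctan_sub_sub_le (a b : ℝ) :
    |Real.arctan a - Real.arctan b - (a - b) / (1 + b ^ 2)| ≤ (a - b) ^ 2 := by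
  rcases eq_or_ne a b with rfl | h
  · simp
  obtain ⟨c, hc, e⟩ := exists_arctan_sub_eq h
  have hcb : |b - c| ≤ |a - b| := by
    rcases h.lt_or_gt with h | h
    · rw [min_eq_left h.le, max_eq_right h.le] at hc
      rw [abs_of_pos (by linarith [hc.2]), abs_of_neg (by linarith)]
      linarith [hc.1]
    · rw [min_eq_right h.le, max_eq_left h.le] at hc
      rw [abs_of_neg (by linarith [hc.1]), abs_of_pos (by linarith)]
      linarith [hc.2]
  have hbc : |b + c| ≤ (1 + c ^ 2) * (1 + b ^ 2) := by
    rw [abs_le]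
    constructor <;> nlinarith [sq_nonneg (b + 1), sq_nonneg (b - 1), sq_nonneg (c + 1),
      sq_nonneg (c - 1), sq_nonneg (b * c)]
  rw [e, show (a - b) / (1 + c ^ 2) - (a - b) / (1 + b ^ 2) =
    (a - b) * (b - c) * ((b + c) / ((1 + c ^ 2) * (1 + b ^ 2))) by field_simp; ring, abs_mul,
    abs_mul, abs_div, abs_of_pos (show 0 < (1 + c ^ 2) * (1 + b ^ 2) by positivity)]
  have h1 : |b + c| / ((1 + c ^ 2) * (1 + b ^ 2)) ≤ 1 := (div_le_one (by positivity)).2 hbc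
  calc |a - b| * |b - c| * (|b + c| / ((1 + c ^ 2) * (1 + b ^ 2)))
      ≤ |a - b| * |a - b| * 1 := by gcongr
    _ = (a - b) ^ 2 := by rw [mul_one, abs_mul_abs_self, sq]

theorem arctan_sub_sub_neg {a b : ℝ} (ha : 0 < a) (hb : 0 < b) (h : a ≠ b) :
    Real.arctan a - Real.arctan b - (a - b) / (1 + b ^ 2) < 0 := by
  obtain ⟨c, hc, e⟩ := exists_arctan_sub_eq h
  have hc0 : 0 < c := (lt_min ha hb).trans hc.1
  rw [e, show (a - b) / (1 + c ^ 2) - (a - b) / (1 + b ^ 2) =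
    (a - b) * (b - c) * ((b + c) / ((1 + c ^ 2) * (1 + b ^ 2))) by field_simp; ring]
  refine mul_neg_of_neg_of_pos ?_ (by positivity)
  rcases h.lt_or_gt with h | h
  · rw [min_eq_left h.le, max_eq_right h.le] at hc
    exact mul_neg_of_neg_of_pos (by linarith) (by linarith [hc.2])
  · rw [min_eq_right h.le, max_eq_left h.le] at hc
    exact mul_neg_of_pos_of_neg (by linarith) (by linarith [hc.1])

open Matrix Finset in
theorem abs_slAngle_sub_sub_le {d : ℕ} {A B : Matrix (Fin d) (Fin d) ℝ}
    (hA : A.IsHermitian) (hB : B.IsHermitian) :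
    |slAngle A - slAngle B - trace ((1 + B * B)⁻¹ * (A - B))| ≤ trace ((A - B) * (A - B)) := by
  obtain ⟨w, hw, h1, h2⟩ := exists_weights_slAngle_sub hA hB
  rw [h1, h2]
  refine (abs_sum_le_sum_abs _ _).trans (sum_le_sum fun i _ => ?_)
  refine (abs_sum_le_sum_abs _ _).trans (sum_le_sum fun j _ => ?_)
  rw [abs_mul, abs_of_nonneg (hw i j)]
  exact mul_le_mul_of_nonneg_left (abs_arctan_sub_sub_le _ _) (hw i j)

open Matrix Finset in
theorem slAngle_sub_sub_neg {d : ℕ} {A B : Matrix (Fin d) (Fin d) ℝ}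
    (hA : A.PosDef) (hB : B.PosDef) (hAB : A ≠ B) :
    slAngle A - slAngle B - trace ((1 + B * B)⁻¹ * (A - B)) < 0 := by
  obtain ⟨w, hw, h1, h2⟩ := exists_weights_slAngle_sub hA.isHermitian hB.isHermitian
  rw [h1]
  have hle : ∀ i j, w i j * (Real.arctan (hA.isHermitian.eigenvalues i) -
      Real.arctan (hB.isHermitian.eigenvalues j) -
      (hA.isHermitian.eigenvalues i - hB.isHermitian.eigenvalues j) /
        (1 + hB.isHermitian.eigenvalues j ^ 2)) ≤ 0 := by
    intro i j
    refine mul_nonpos_of_nonneg_of_nonpos (hw i j) ?_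
    rcases eq_or_ne (hA.isHermitian.eigenvalues i) (hB.isHermitian.eigenvalues j) with h | h
    · simp [h]
    · exact (arctan_sub_sub_neg (hA.eigenvalues_pos i) (hB.eigenvalues_pos j) h).le
  refine lt_of_le_of_ne (sum_nonpos fun i _ => sum_nonpos fun j _ => hle i j) fun h0 => hAB ?_
  have hz : ∀ i j, w i j * (hA.isHermitian.eigenvalues i - hB.isHermitian.eigenvalues j) ^ 2
      = 0 := by
    intro i j
    have hi := (sum_eq_zero_iff_of_nonpos fun i _ => sum_nonpos fun j _ => hle i j).1 h0 i
      (mem_univ i)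
    have hj := (sum_eq_zero_iff_of_nonpos fun j _ => hle i j).1 hi j (mem_univ j)
    rcases mul_eq_zero.1 hj with h | h
    · simp [h]
    · by_cases hne : hA.isHermitian.eigenvalues i = hB.isHermitian.eigenvalues j
      · simp [hne]
      · exact absurd h
          (arctan_sub_sub_neg (hA.eigenvalues_pos i) (hB.eigenvalues_pos j) hne).ne
  simp only [hz, sum_const_zero] at h2
  have hH : (A - B)ᴴ = A - B := (hA.isHermitian.sub hB.isHermitian).eq
  have h3 : trace ((A - B)ᴴ * (A - B)) = 0 := by rw [hH, h2]
  exact sub_eq_zero.1 (trace_conjTranspose_mul_self_eq_zero_iff.1 h3)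

open Matrix in
theorem strictConcaveOn_slAngle {d : ℕ} :
    StrictConcaveOn ℝ {A : Matrix (Fin d) (Fin d) ℝ | A.IsSymm ∧ A.PosDef} slAngle := by
  have hmem : ∀ {A B : Matrix (Fin d) (Fin d) ℝ} {s t : ℝ}, A.PosDef → B.PosDef → 0 < s → 0 < t →
      (s • A + t • B).PosDef := fun hA hB hs ht => (hA.smul hs).add (hB.smul ht)
  refine ⟨convex_iff_forall_pos.2 ?_, ?_⟩
  · intro A hA B hB s t hs ht _
    exact ⟨(hA.1.smul s).add (hB.1.smul t), hmem hA.2 hB.2 hs ht⟩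
  · intro A hA B hB hAB s t hs ht hst
    have hC := hmem hA.2 hB.2 hs ht
    have eA : A - (s • A + t • B) = t • (A - B) := by
      obtain rfl : s = 1 - t := by linarith
      module
    have eB : B - (s • A + t • B) = -(s • (A - B)) := by
      obtain rfl : s = 1 - t := by linarith
      module
    have hne : A - B ≠ 0 := sub_ne_zero.2 hAB
    have h1 := slAngle_sub_sub_neg hA.2 hC (by
      rw [← sub_ne_zero, eA]; exact smul_ne_zero ht.ne' hne)
    have h2 := slAngle_sub_sub_neg hB.2 hC (by
      rw [← sub_ne_zero, eB]; exact neg_ne_zero.2 (smul_ne_zero hs.ne' hne))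
    rw [eA, Matrix.mul_smul, trace_smul, smul_eq_mul] at h1
    rw [eB, Matrix.mul_neg, Matrix.mul_smul, trace_neg, trace_smul, smul_eq_mul] at h2
    simp only [smul_eq_mul]
    set C := s • A + t • B
    have h3 : slAngle C = s * slAngle C + t * slAngle C := by rw [← add_mul, hst, one_mul]
    rw [h3]
    nlinarith [mul_neg_of_pos_of_neg hs h1, mul_neg_of_pos_of_neg ht h2]

open Matrix in
theorem hasDerivAt_slAngle_add_smul {d : ℕ} {A B : Matrix (Fin d) (Fin d) ℝ}
    (hA : A.IsHermitian) (hB : B.IsHermitian) (t : ℝ) :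
    HasDerivAt (fun t : ℝ => slAngle (A + t • B))
      (trace ((1 + (A + t • B) * (A + t • B))⁻¹ * B)) t := by
  have hH : ∀ s : ℝ, (A + s • B).IsHermitian := fun s =>
    hA.add (hB.smul (IsSelfAdjoint.all s))
  rw [hasDerivAt_iff_isLittleO]
  refine Asymptotics.IsBigO.trans_isLittleO (g := fun s : ℝ => (s - t) ^ 2)
    (Asymptotics.IsBigO.of_bound (trace (B * B)) (Filter.Eventually.of_forall fun s => ?_)) ?_
  · have h := abs_slAngle_sub_sub_le (hH s) (hH t)
    rw [show A + s • B - (A + t • B) = (s - t) • B by module] at h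
    simp only [Matrix.mul_smul, Matrix.smul_mul, trace_smul, smul_eq_mul] at h
    rw [smul_eq_mul, Real.norm_eq_abs, Real.norm_eq_abs, abs_of_nonneg (sq_nonneg (s - t))]
    linarith
  · simpa only [Real.norm_eq_abs, sq_abs] using Asymptotics.isLittleO_pow_sub_sub t one_lt_two

open Matrix Filter Topology in
theorem hasDerivAt_trace_inv_one_add_sq_mul {d : ℕ} {A B : Matrix (Fin d) (Fin d) ℝ}
    (hA : A.IsHermitian) (hB : B.IsHermitian) :
    HasDerivAt (fun t : ℝ => trace ((1 + (A + t • B) * (A + t • B))⁻¹ * B))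
      (-trace ((1 + A * A)⁻¹ * (A * B + B * A) * (1 + A * A)⁻¹ * B)) 0 := by
  have hH : ∀ s : ℝ, (A + s • B).IsHermitian := fun s =>
    hA.add (hB.smul (IsSelfAdjoint.all s))
  have hdet : ∀ s : ℝ, IsUnit (1 + (A + s • B) * (A + s • B)).det := fun s =>
    (det_one_add_sq_ne_zero (hH s)).isUnit
  have hdet0 : IsUnit (1 + A * A).det := (det_one_add_sq_ne_zero hA).isUnit
  have hcont : Continuous fun s : ℝ => (1 + (A + s • B) * (A + s • B))⁻¹ := by
    simp only [inv_def, Ring.inverse_eq_inv']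
    have hM : Continuous fun s : ℝ => 1 + (A + s • B) * (A + s • B) := by fun_prop
    exact (hM.matrix_det.inv₀ fun s => det_one_add_sq_ne_zero (hH s)).smul hM.matrix_adjugate
  rw [hasDerivAt_iff_tendsto_slope_zero]
  have hlim : Tendsto (fun s : ℝ => -trace ((1 + (A + s • B) * (A + s • B))⁻¹ *
      (A * B + B * A + s • (B * B)) * (1 + A * A)⁻¹ * B)) (𝓝[≠] 0)
      (𝓝 (-trace ((1 + A * A)⁻¹ * (A * B + B * A) * (1 + A * A)⁻¹ * B))) := by
    have hc : Continuous fun s : ℝ => -trace ((1 + (A + s • B) * (A + s • B))⁻¹ *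
        (A * B + B * A + s • (B * B)) * (1 + A * A)⁻¹ * B) := by fun_prop
    have := hc.tendsto 0
    simp only [zero_smul, add_zero] at this
    exact this.mono_left nhdsWithin_le_nhds
  refine hlim.congr' ?_
  filter_upwards [self_mem_nhdsWithin] with s hs
  have hres : (1 + (A + s • B) * (A + s • B))⁻¹ - (1 + A * A)⁻¹ =
      -(s • ((1 + (A + s • B) * (A + s • B))⁻¹ *
        (A * B + B * A + s • (B * B)) * (1 + A * A)⁻¹)) := by
    have hdiff : s • (A * B + B * A + s • (B * B)) =
        (1 + (A + s • B) * (A + s • B)) - (1 + A * A) := by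
      simp only [Matrix.add_mul, Matrix.mul_add, Matrix.smul_mul, Matrix.mul_smul]
      module
    rw [← Matrix.smul_mul, ← Matrix.mul_smul, hdiff, Matrix.mul_sub, nonsing_inv_mul _ (hdet s),
      Matrix.sub_mul, Matrix.one_mul, Matrix.mul_assoc, mul_nonsing_inv _ hdet0, Matrix.mul_one,
      neg_sub]
  simp only [zero_add, zero_smul, add_zero]
  rw [← trace_sub, ← Matrix.sub_mul, hres, Matrix.neg_mul, Matrix.smul_mul, trace_neg, trace_smul,
    smul_neg, smul_smul, inv_mul_cancel₀ hs, one_smul]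

open Matrix in
theorem trace_inv_mul_anticommutator_mul {d : ℕ} {A B : Matrix (Fin d) (Fin d) ℝ}
    (hA : A.IsSymm) (hB : B.IsSymm) :
    trace ((1 + A * A)⁻¹ * (A * B + B * A) * (1 + A * A)⁻¹ * B) =
      2 * trace ((1 + A * A)⁻¹ * A * B * (1 + A * A)⁻¹ * B) := by
  have hR : ((1 + A * A)⁻¹)ᵀ = (1 + A * A)⁻¹ := by
    rw [transpose_nonsing_inv, transpose_add, transpose_mul, hA.eq, transpose_one]
  set R := (1 + A * A)⁻¹
  have h : trace (R * B * A * R * B) = trace (R * A * B * R * B) := by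
    rw [← trace_transpose]
    simp only [transpose_mul, hR, hA.eq, hB.eq]
    rw [show B * (R * (A * (B * R))) = (B * R * A * B) * R by simp only [Matrix.mul_assoc],
      trace_mul_comm, show R * (B * R * A * B) = (R * B) * (R * A * B) by
        simp only [Matrix.mul_assoc], trace_mul_comm]
    simp only [Matrix.mul_assoc]
  rw [Matrix.mul_add, Matrix.add_mul, Matrix.add_mul, trace_add, ← Matrix.mul_assoc,
    ← Matrix.mul_assoc, h, two_mul]

/-- D²Θ(A)(B,B) = −2 Tr((Id + A²)⁻¹ A B (Id + A²)⁻¹ B) for symmetric A, B; consequently Θ is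
strictly concave on the open cone of positive definite symmetric matrices. -/
theorem slAngle_second_deriv_and_strictConcave {d : ℕ} :
    (∀ A B : Matrix (Fin d) (Fin d) ℝ, A.IsSymm → B.IsSymm →
      iteratedDeriv 2 (fun t : ℝ => slAngle (A + t • B)) 0
        = -2 * Matrix.trace ((1 + A * A)⁻¹ * A * B * (1 + A * A)⁻¹ * B)) ∧
    StrictConcaveOn ℝ {A : Matrix (Fin d) (Fin d) ℝ | A.IsSymm ∧ A.PosDef} slAngle := by
  refine ⟨fun A B hA hB => ?_, strictConcaveOn_slAngle⟩
  have hA' : A.IsHermitian := (Matrix.conjTranspose_eq_transpose_of_trivial A).trans hA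
  have hB' : B.IsHermitian := (Matrix.conjTranspose_eq_transpose_of_trivial B).trans hB
  rw [iteratedDeriv_succ, iteratedDeriv_one,
    funext fun t => (hasDerivAt_slAngle_add_smul hA' hB' t).deriv,
    (hasDerivAt_trace_inv_one_add_sq_mul hA' hB').deriv, trace_inv_mul_anticommutator_mul hA hB,
    neg_mul]
end

section
/- Let d ≥ 2, let S be a topological d-sphere, Y a connected d-manifold, and φ : Y → S a local homeomorphism. Suppose there is an open subset U ⊆ Y such that φ|_U is a covering map onto S ∖ F for a finite set F of cardinality k ≤ 2. Then φ itself is a covering map onto S ∖ F' for some finite F' ⊆ S with |F'| ≤ k. -/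
open Topology Set

/-- In a manifold of dimension at least two, every point has arbitrarily small neighbourhoods that
stay preconnected when the point is removed. -/
theorem exists_nhds_isPreconnected_diff_singleton {d : ℕ} (hd : 2 ≤ d) {Y : Type*}
    [TopologicalSpace Y] [ChartedSpace (EuclideanSpace ℝ (Fin d)) Y] (y : Y) {N : Set Y}
    (hN : N ∈ 𝓝 y) : ∃ B ∈ 𝓝 y, B ⊆ N ∧ IsPreconnected (B \ {y}) := by
  let c := chartAt (EuclideanSpace ℝ (Fin d)) y
  have hy : y ∈ c.source := mem_chart_source _ y
  have h1 : c.target ∩ c.symm ⁻¹' N ∈ 𝓝 (c y) :=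
    Filter.inter_mem (c.open_target.mem_nhds (c.map_source hy))
      ((c.continuousAt_symm (c.map_source hy)).preimage_mem_nhds (by rwa [c.left_inv hy]))
  obtain ⟨r, hr, hball⟩ := Metric.mem_nhds_iff.1 h1
  have hsub : Metric.ball (c y) r ⊆ c.target := fun v hv => (hball hv).1
  refine ⟨c.symm '' Metric.ball (c y) r, ?_, ?_, ?_⟩
  · have := c.symm.image_mem_nhds (c.map_source hy) (Metric.ball_mem_nhds (c y) hr)
    rwa [c.left_inv hy] at this
  · rintro _ ⟨v, hv, rfl⟩
    exact (hball hv).2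
  · let e := OpenPartialHomeomorph.univBall (c y) r
    have he : e.target = Metric.ball (c y) r := OpenPartialHomeomorph.univBall_target (c y) hr
    have hs : e.source = univ := OpenPartialHomeomorph.univBall_source (c y) r
    have h0 : e 0 = c y := OpenPartialHomeomorph.univBall_apply_zero (c y) r
    have hrank : 1 < Module.rank ℝ (EuclideanSpace ℝ (Fin d)) := by
      rw [← Module.finrank_eq_rank, finrank_euclideanSpace_fin]
      exact_mod_cast hd
    have hce : ∀ v, e v ∈ c.target := fun v =>
      hsub (he ▸ e.map_source (hs ▸ mem_univ v))
    have himg : c.symm '' Metric.ball (c y) r \ {y} = (fun v => c.symm (e v)) '' {0}ᶜ := by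
      ext z
      constructor
      · rintro ⟨⟨v, hv, rfl⟩, hz⟩
        rw [← he] at hv
        refine ⟨e.symm v, ?_, by simp [e.right_inv hv]⟩
        rintro (h : e.symm v = 0)
        apply hz
        rw [mem_singleton_iff, ← e.right_inv hv, h, h0, c.left_inv hy]
      · rintro ⟨v, hv, rfl⟩
        refine ⟨⟨e v, he ▸ e.map_source (hs ▸ mem_univ v), rfl⟩, ?_⟩
        rintro (h : c.symm (e v) = y)
        apply hv
        have h2 : e v = e 0 := by rw [h0, ← c.right_inv (hce v), h]
        exact e.injOn (hs ▸ mem_univ v) (hs ▸ mem_univ 0) h2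
    rw [himg]
    refine (isConnected_compl_singleton_of_one_lt_rank hrank 0).isPreconnected.image _ ?_
    have hec : Continuous e := by
      rw [← continuousOn_univ, ← hs]
      exact e.continuousOn
    exact (c.continuousOn_symm.comp_continuous hec hce).continuousOn

/-- In a connected manifold of dimension at least two, a nonempty open set whose boundary lies over
a finite set under a local homeomorphism is dense. -/
theorem dense_of_frontier_over_finite {d : ℕ} (hd : 2 ≤ d) {Y S : Type*}
    [TopologicalSpace Y] [ChartedSpace (EuclideanSpace ℝ (Fin d)) Y]
    [PreconnectedSpace Y] [TopologicalSpace S] [T1Space S]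
    {φ : Y → S} (hφ : IsLocalHomeomorph φ) {U : Set Y} (hU : IsOpen U) (hne : U.Nonempty)
    {F : Set S} (hF : F.Finite) (hcl : ∀ y ∈ closure U, φ y ∉ F → y ∈ U) : Dense U := by
  have hopen : IsOpen (closure U) := by
    rw [isOpen_iff_mem_nhds]
    intro y hy
    by_cases hyU : y ∈ U
    · exact Filter.mem_of_superset (hU.mem_nhds hyU) subset_closure
    obtain ⟨N, hNo, hyN, hinj⟩ := hφ.isLocallyInjective y
    have hfin : (F \ {φ y})ᶜ ∈ 𝓝 (φ y) :=
      (hF.subset sdiff_subset).isClosed.isOpen_compl.mem_nhds (by simp)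
    obtain ⟨B, hB, hBN, hBc⟩ := exists_nhds_isPreconnected_diff_singleton hd y
      (Filter.inter_mem (hNo.mem_nhds hyN) (hφ.continuous.continuousAt hfin))
    have hBF : ∀ b ∈ B \ {y}, φ b ∉ F := by
      intro b hb hbF
      obtain ⟨hbN, hbF'⟩ := hBN hb.1
      exact hbF' ⟨hbF, fun h => hb.2 (hinj hbN hyN h)⟩
    have hsub : B \ {y} ⊆ U := by
      refine hBc.subset_left_of_subset_union hU isClosed_closure.isOpen_compl
        (disjoint_compl_right.mono_left subset_closure) ?_ ?_
      · intro b hb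
        by_cases h : b ∈ closure U
        · exact .inl (hcl b h (hBF b hb))
        · exact .inr h
      · obtain ⟨b, hbB, hbU⟩ := mem_closure_iff_nhds.1 hy B hB
        exact ⟨b, ⟨hbB, fun h => hyU (h ▸ hbU)⟩, hbU⟩
    refine Filter.mem_of_superset hB fun b hb => ?_
    by_cases h : b = y
    · exact h ▸ hy
    · exact subset_closure (hsub ⟨hb, h⟩)
  exact dense_iff_closure_eq.2 (IsClopen.eq_univ ⟨isClosed_closure, hopen⟩ hne.closure)

/-- If a local homeomorphism `φ` restricts to a covering map `U → S ∖ F`, then the boundary points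
of `U` are mapped into `F`. -/
theorem mem_of_mem_closure_of_isCoveringMap {Y S : Type*}
    [TopologicalSpace Y] [LocallyConnectedSpace Y] [T2Space Y] [TopologicalSpace S]
    {φ : Y → S} (hφ : IsLocalHomeomorph φ) {U : Set Y} {F : Set S} (hF : IsClosed F)
    (hmaps : ∀ u : U, φ u ∉ F)
    (hcov : IsCoveringMap (fun u : U => (⟨φ u, hmaps u⟩ : {x : S // x ∉ F})))
    {y : Y} (hy : y ∈ closure U) (hyF : φ y ∉ F) : y ∈ U := by
  obtain ⟨-, V, hyV, hV, -, H, hH⟩ := hcov ⟨φ y, hyF⟩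
  have hF' : IsOpen {x : S | x ∉ F} := hF.isOpen_compl
  have hVS : IsOpen (Subtype.val '' V : Set S) := hF'.isOpenMap_subtype_val V hV
  have hyN : φ ⁻¹' (Subtype.val '' V) ∈ 𝓝 y :=
    hφ.continuous.continuousAt (hVS.mem_nhds ⟨_, hyV, rfl⟩)
  obtain ⟨B, ⟨hBo, hyB, hBc⟩, hBN⟩ :=
    (LocallyConnectedSpace.open_connected_basis y).mem_iff.1 hyN
  obtain ⟨u, huB, huU⟩ := mem_closure_iff.1 hy B hBo hyB
  have hBF : ∀ b : B, φ b ∉ F := fun b => by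
    obtain ⟨v, -, hv⟩ := hBN b.2
    exact hv ▸ v.2
  have hBV : ∀ b : B, (⟨φ b, hBF b⟩ : {x : S // x ∉ F}) ∈ V := fun b => by
    obtain ⟨v, hvV, hv⟩ := hBN b.2
    convert hvV
    exact hv.symm
  let i := (H ⟨⟨u, huU⟩, hBV ⟨u, huB⟩⟩).2
  have := isPreconnected_iff_preconnectedSpace.1 hBc.isPreconnected
  let g : B → Y := fun b => (H.symm (⟨⟨φ b, hBF b⟩, hBV b⟩, i)).1.1
  have hφc := hφ.continuous
  have hg : Continuous g := by fun_prop
  have hφg : φ ∘ g = φ ∘ ((↑) : B → Y) := by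
    funext b
    have := hH (H.symm (⟨⟨φ b, hBF b⟩, hBV b⟩, i))
    rw [H.apply_symm_apply] at this
    exact (congrArg Subtype.val this).symm
  have hgu : g ⟨u, huB⟩ = u := by
    have : ((⟨⟨φ u, hBF ⟨u, huB⟩⟩, hBV ⟨u, huB⟩⟩, i) : V × _) = H ⟨⟨u, huU⟩, hBV ⟨u, huB⟩⟩ :=
      Prod.ext (Subtype.ext (hH ⟨⟨u, huU⟩, hBV ⟨u, huB⟩⟩).symm) rfl
    change (H.symm (⟨⟨φ u, hBF ⟨u, huB⟩⟩, hBV ⟨u, huB⟩⟩, i)).1.1 = u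
    rw [this, H.symm_apply_apply]
  have hsep : IsSeparatedMap φ := T2Space.isSeparatedMap φ
  have heq := hsep.eq_of_comp_eq hφ.isLocallyInjective hg continuous_subtype_val hφg
    ⟨u, huB⟩ hgu
  have hyg : g ⟨y, hyB⟩ = y := congrFun heq ⟨y, hyB⟩
  rw [← hyg]
  exact Subtype.coe_prop _

/-- The complement of two points `x ≠ f` of a one-point compactification of a normed space can be
deformed into any neighbourhood of `x` by pushing radially away from `f`. -/
theorem exists_homotopy_into_nhds {E S : Type*} [NormedAddCommGroup E] [NormedSpace ℝ E]
    [TopologicalSpace S] [CompactSpace S] {x f : S} (hxf : f ≠ x) (c : OpenPartialHomeomorph S E)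
    (hs : c.source = {x}ᶜ) (ht : c.target = univ) {O : Set S} (hO : O ∈ 𝓝 x) :
    ∃ H : C(unitInterval × {z : S // z ∉ ({x, f} : Set S)}, {z : S // z ∉ ({x, f} : Set S)}),
      (∀ z, H (1, z) = z) ∧ ∀ z, (H (0, z) : S) ∈ O := by
  have hK : IsCompact (interior O)ᶜ := isOpen_interior.isClosed_compl.isCompact
  have hKs : (interior O)ᶜ ⊆ c.source := by
    rw [hs, compl_subset_compl, singleton_subset_iff]
    exact mem_interior_iff_mem_nhds.2 hO
  obtain ⟨R, hR0, hR⟩ := ((hK.image_of_continuousOn (c.continuousOn.mono hKs)).isBounded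
    ).subset_closedBall_lt 0 (c f)
  have hfs : f ∈ c.source := by rw [hs]; exact hxf
  have hzs : ∀ z : {z : S // z ∉ ({x, f} : Set S)}, (z : S) ∈ c.source := fun z => by
    rw [hs]; exact fun h => z.2 (.inl h)
  have htgt : ∀ v, v ∈ c.target := fun v => ht ▸ mem_univ v
  have hv : ∀ z : {z : S // z ∉ ({x, f} : Set S)}, c z - c f ≠ 0 := fun z h =>
    z.2 (.inr (c.injOn (hzs z) hfs (sub_eq_zero.1 h)))
  let k : unitInterval × {z : S // z ∉ ({x, f} : Set S)} → ℝ := fun p =>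
    1 + (1 - (p.1 : ℝ)) * R / ‖c p.2 - c f‖
  let w : unitInterval × {z : S // z ∉ ({x, f} : Set S)} → E := fun p =>
    c f + k p • (c p.2 - c f)
  have hk : ∀ p, 0 < k p := fun p => by
    have h1 : 0 ≤ 1 - (p.1 : ℝ) := sub_nonneg.2 p.1.2.2
    positivity
  have hc : Continuous fun z : {z : S // z ∉ ({x, f} : Set S)} => c z :=
    c.continuousOn.comp_continuous continuous_subtype_val hzs
  have hc2 : Continuous fun p : unitInterval × {z : S // z ∉ ({x, f} : Set S)} => c p.2 :=
    hc.comp continuous_snd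
  have hw : Continuous w := by
    have : Continuous k := by
      refine continuous_const.add (Continuous.div (by fun_prop) (hc2.sub continuous_const).norm
        fun p => ?_)
      exact norm_ne_zero_iff.2 (hv p.2)
    exact continuous_const.add (this.smul (hc2.sub continuous_const))
  have hmem : ∀ p, c.symm (w p) ∉ ({x, f} : Set S) := by
    rintro p (h | h)
    · have := c.map_target (htgt (w p))
      rw [hs] at this
      exact this h
    · have h1 : w p = c f := by rw [← h, c.right_inv (htgt _)]
      have h2 : k p • (c p.2 - c f) = 0 := by simpa [w] using h1
      exact (smul_ne_zero (hk p).ne' (hv p.2)) h2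
  refine ⟨⟨fun p => ⟨c.symm (w p), hmem p⟩, ?_⟩, fun z => ?_, fun z => ?_⟩
  · exact (c.continuousOn_symm.comp_continuous hw fun p => htgt _).subtype_mk _
  · apply Subtype.ext
    simp [w, k, c.left_inv (hzs z)]
  · by_contra hcon
    have h1 : c (c.symm (w (0, z))) ∈ Metric.closedBall (c f) R :=
      hR (mem_image_of_mem c fun h => hcon (interior_subset h))
    rw [c.right_inv (htgt _), mem_closedBall_iff_norm] at h1
    have h2 : 0 < ‖c z - c f‖ := norm_pos_iff.2 (hv z)
    have h3 : ‖w (0, z) - c f‖ = ‖c z - c f‖ + R := by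
      simp only [w, add_sub_cancel_left, norm_smul, Real.norm_eq_abs, abs_of_pos (hk _)]
      simp only [k, Icc.coe_zero]
      field_simp
      ring
    linarith

theorem Homeomorph.isCoveringMap {X Y : Type*} [TopologicalSpace X] [TopologicalSpace Y]
    (h : X ≃ₜ Y) : IsCoveringMap h := fun y =>
  IsEvenlyCovered.to_isEvenlyCovered_preimage (I := Unit)
    ⟨inferInstance, univ, mem_univ y, isOpen_univ, isOpen_univ,
      ((Homeomorph.Set.univ X).trans h).trans
        ((Homeomorph.Set.univ Y).symm.trans (Homeomorph.prodUnique _ Unit).symm), fun _ => rfl⟩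

/-- Stereographic projection of a topological sphere from an arbitrary point. -/
theorem exists_stereographic {d : ℕ} {S : Type*} [TopologicalSpace S]
    (h : S ≃ₜ Metric.sphere (0 : EuclideanSpace ℝ (Fin (d + 1))) 1) (x : S) :
    ∃ c : OpenPartialHomeomorph S (EuclideanSpace ℝ (Fin d)),
      c.source = {x}ᶜ ∧ c.target = univ := by
  have : Fact (Module.finrank ℝ (EuclideanSpace ℝ (Fin (d + 1))) = d + 1) := ⟨by simp⟩
  refine ⟨h.toOpenPartialHomeomorph.trans (stereographic' d (h x)), ?_, ?_⟩
  · ext z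
    simp
  · ext z
    simp

/-- If a local homeomorphism to a sphere is a covering map over the complement of at most two
points, and one of these points is in its range, then it is injective. -/
theorem injective_of_mem_range {d : ℕ} (hd : 2 ≤ d) {Y S : Type*}
    [TopologicalSpace Y] [ChartedSpace (EuclideanSpace ℝ (Fin d)) Y] [T2Space Y]
    [ConnectedSpace Y] [TopologicalSpace S] [T2Space S]
    (h : S ≃ₜ Metric.sphere (0 : EuclideanSpace ℝ (Fin (d + 1))) 1)
    {φ : Y → S} (hφ : IsLocalHomeomorph φ) {U : Set Y} {F : Set S}
    (hmaps : ∀ u : U, φ u ∉ F)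
    (hcov : IsCoveringMap (fun u : U => (⟨φ u, hmaps u⟩ : {x : S // x ∉ F})))
    (hUF : ∀ y, φ y ∉ F → y ∈ U) {y₀ : Y} {f : S} (hf : f ≠ φ y₀) (hF : F ⊆ {φ y₀, f}) :
    Function.Injective φ := by
  have : CompactSpace S := h.symm.compactSpace
  have : Nontrivial (EuclideanSpace ℝ (Fin d)) :=
    Module.nontrivial_of_finrank_pos (R := ℝ) (by rw [finrank_euclideanSpace_fin]; omega)
  obtain ⟨c, hcs, hct⟩ := exists_stereographic h (φ y₀)
  obtain ⟨e, hy₀, rfl⟩ := hφ y₀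
  have heO : e.target ∈ 𝓝 (e y₀) := e.open_target.mem_nhds (e.map_source hy₀)
  obtain ⟨H, H1, H0⟩ := exists_homotopy_into_nhds hf c hcs hct heO
  let G : Set S := {e y₀, f}
  have hG : G.Finite := by simp [G]
  have hmem : ∀ z : {z : S // z ∉ G}, e.symm (H (0, z)) ∈ U := fun z =>
    hUF _ (by rw [e.right_inv (H0 z)]; exact fun h => (H (0, z)).2 (hF h))
  let ι : C({z : S // z ∉ G}, {x : S // x ∉ F}) :=
    ⟨fun z => ⟨z, fun h => z.2 (hF h)⟩, by fun_prop⟩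
  let g : C({z : S // z ∉ G}, U) := ⟨fun z => ⟨e.symm (H (0, z)), hmem z⟩, by
    refine (e.continuousOn_symm.comp_continuous ?_ H0).subtype_mk _
    fun_prop⟩
  have hg : ∀ z, (ι.comp H) (0, z) = ⟨e (g z), hmaps (g z)⟩ := fun z =>
    Subtype.ext (e.right_inv (H0 z)).symm
  let L := hcov.liftHomotopy (ι.comp H) g hg
  let s : {z : S // z ∉ G} → Y := fun z => L (1, z)
  have hs : Continuous s := by fun_prop
  have hes : ∀ z, e (s z) = z := fun z => by
    have := congrArg Subtype.val (congrFun (hcov.liftHomotopy_lifts (ι.comp H) g hg) (1, z))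
    refine this.trans ?_
    change ((H (1, z) : {z : S // z ∉ G}) : S) = z
    rw [H1]
  have hso : IsOpenEmbedding s := by
    refine hφ.isOpenEmbedding_of_comp ?_ hs
    rw [show e ∘ s = Subtype.val from funext hes]
    exact hG.isClosed.isOpen_compl.isOpenEmbedding_subtypeVal
  have hne : (range s).Nonempty := by
    obtain ⟨v, hv⟩ := exists_ne (c f)
    have hvt : v ∈ c.target := hct ▸ mem_univ v
    refine ⟨_, ⟨c.symm v, ?_⟩, rfl⟩
    rintro (h1 | h1)
    · have := c.map_target hvt
      rw [hcs] at this
      exact this h1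
    · apply hv
      rw [← c.right_inv hvt]
      exact congrArg c h1
  have hcl : ∀ y ∈ closure (range s), ∀ hy : e y ∉ G, s ⟨e y, hy⟩ = y := by
    intro y hy hyG
    by_contra hcon
    obtain ⟨A, B, hA, hB, hyA, hyB, hAB⟩ := t2_separation hcon
    have hφc : Continuous e := hφ.continuous
    obtain ⟨W, hW, hWA⟩ := isOpen_induced_iff.1 (hA.preimage hs)
    have hyW : e y ∈ W := by
      have : (⟨e y, hyG⟩ : {z : S // z ∉ G}) ∈ Subtype.val ⁻¹' W := by rw [hWA]; exact hyA
      exact this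
    obtain ⟨_, ⟨hbB, hbW⟩, z, rfl⟩ := mem_closure_iff.1 hy (B ∩ e ⁻¹' W)
      (hB.inter (hW.preimage hφc)) ⟨hyB, hyW⟩
    have hzA : z ∈ s ⁻¹' A := by
      rw [← hWA]
      have : e (s z) ∈ W := hbW
      rwa [hes] at this
    exact hAB.le_bot ⟨hzA, hbB⟩
  have hdense : Dense (range s) := dense_of_frontier_over_finite hd hφ hso.isOpen_range hne hG
    fun y hy hyG => ⟨_, hcl y hy hyG⟩
  intro y₁ y₂ hy
  by_contra hne
  obtain ⟨A, B, hA, hB, hyA, hyB, hAB⟩ := t2_separation hne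
  obtain ⟨_, ⟨hzA, b, hbB, hb⟩, z, rfl⟩ := hdense.inter_open_nonempty (A ∩ e ⁻¹' (e '' B))
    (hA.inter ((hφ.isOpenMap B hB).preimage hφ.continuous)) ⟨y₁, hyA, y₂, hyB, hy.symm⟩
  rw [hes] at hb
  have hbs : s z = b := by
    have := hcl b (hdense b) (hb ▸ z.2)
    rwa [show (⟨e b, hb ▸ z.2⟩ : {z : S // z ∉ G}) = z from Subtype.ext hb] at this
  exact hAB.le_bot ⟨hzA, hbs ▸ hbB⟩


/-- Monotonicity of finite type: let d ≥ 2, S a topological d-sphere, Y a connected d-manifold and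
φ : Y → S a local homeomorphism. If there is an open U ⊆ Y such that φ|_U is a covering map onto
S ∖ F for a finite set F with |F| ≤ 2, then φ is a covering map onto S ∖ F' for some finite
F' ⊆ S with |F'| ≤ |F|. -/
theorem finite_type_monotonicity {d : ℕ} (hd : 2 ≤ d) {Y S : Type*}
    [TopologicalSpace Y] [ChartedSpace (EuclideanSpace ℝ (Fin d)) Y] [T2Space Y]
    [ConnectedSpace Y] [TopologicalSpace S] [T2Space S]
    (hS : Nonempty (S ≃ₜ Metric.sphere (0 : EuclideanSpace ℝ (Fin (d + 1))) 1))
    (φ : Y → S) (hφ : IsLocalHomeomorph φ)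
    (U : Set Y) (hU : IsOpen U)
    (F : Finset S) (hF : F.card ≤ 2)
    (hmaps : ∀ u : U, φ u ∉ F)
    (hcov : IsCoveringMap (fun u : U => (⟨φ u, hmaps u⟩ : {x : S // x ∉ F})))
    (hsurj : Function.Surjective (fun u : U => (⟨φ u, hmaps u⟩ : {x : S // x ∉ F}))) :
    ∃ F' : Finset S, F'.card ≤ F.card ∧
      ∃ h : ∀ y : Y, φ y ∉ F',
        IsCoveringMap (fun y : Y => (⟨φ y, h y⟩ : {x : S // x ∉ F'})) ∧
        Function.Surjective (fun y : Y => (⟨φ y, h y⟩ : {x : S // x ∉ F'})) := by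
  classical
  obtain ⟨h⟩ := hS
  have : LocallyConnectedSpace Y :=
    ChartedSpace.locallyConnectedSpace (EuclideanSpace ℝ (Fin d)) Y
  have : Infinite S := by
    have : Nontrivial (EuclideanSpace ℝ (Fin d)) :=
      Module.nontrivial_of_finrank_pos (R := ℝ) (by rw [finrank_euclideanSpace_fin]; omega)
    have : Infinite (EuclideanSpace ℝ (Fin d)) := Module.Free.infinite ℝ _
    obtain ⟨c, -, hct⟩ := exists_stereographic h (φ (Classical.arbitrary Y))
    refine Infinite.of_injective c.symm fun v w hvw => ?_
    exact c.symm.injOn (by simp [hct]) (by simp [hct]) hvw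
  have hcl : ∀ y ∈ closure U, φ y ∉ F → y ∈ U := fun y hy hyF =>
    mem_of_mem_closure_of_isCoveringMap hφ F.finite_toSet.isClosed hmaps hcov hy hyF
  have hUne : U.Nonempty := by
    obtain ⟨z, hz⟩ := Infinite.exists_notMem_finset F
    obtain ⟨u, -⟩ := hsurj ⟨z, hz⟩
    exact ⟨u, u.2⟩
  have hdense := dense_of_frontier_over_finite hd hφ hU hUne F.finite_toSet hcl
  have hUF : ∀ y, φ y ∉ F → y ∈ U := fun y => hcl y (hdense y)
  by_cases hempty : ∀ y, φ y ∉ F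
  · refine ⟨F, le_rfl, hempty, ?_, fun z => ?_⟩
    · have hUu : U = univ := eq_univ_of_forall fun y => hUF y (hempty y)
      exact hcov.comp_homeomorph
        ((Homeomorph.Set.univ Y).symm.trans (Homeomorph.setCongr hUu.symm))
    · obtain ⟨u, hu⟩ := hsurj z
      exact ⟨u, hu⟩
  push Not at hempty
  obtain ⟨y₀, hy₀⟩ := hempty
  obtain ⟨f, hf, hFf⟩ : ∃ f, f ≠ φ y₀ ∧ (F : Set S) ⊆ {φ y₀, f} := by
    have hcard : (F.erase (φ y₀)).card ≤ 1 := by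
      rw [Finset.card_erase_of_mem hy₀]; omega
    have hsub : ∀ f, F.erase (φ y₀) ⊆ {f} → (F : Set S) ⊆ {φ y₀, f} := fun f hf z hz => by
      by_cases hzx : z = φ y₀
      · exact .inl hzx
      · exact .inr (Finset.mem_singleton.1 (hf (Finset.mem_erase.2 ⟨hzx, hz⟩)))
    rcases (F.erase (φ y₀)).eq_empty_or_nonempty with he | ⟨f, hf⟩
    · obtain ⟨f, hf⟩ := exists_ne (φ y₀)
      exact ⟨f, hf, hsub f (by simp [he])⟩
    · exact ⟨f, Finset.ne_of_mem_erase hf,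
        hsub f fun z hz => Finset.mem_singleton.2 (Finset.card_le_one.1 hcard z hz f hf)⟩
  have hinj := injective_of_mem_range hd h hφ hmaps hcov hUF hf hFf
  let F' := F.filter fun z => z ∉ range φ
  have hF' : ∀ y, φ y ∉ F' := fun y hy => (Finset.mem_filter.1 hy).2 ⟨y, rfl⟩
  let ψ : Y → {x : S // x ∉ F'} := fun y => ⟨φ y, hF' y⟩
  have hψs : Function.Surjective ψ := by
    rintro ⟨z, hz⟩
    by_cases hzF : z ∈ F
    · by_contra hcon
      exact hz (Finset.mem_filter.2 ⟨hzF, fun ⟨y, hy⟩ => hcon ⟨y, Subtype.ext hy⟩⟩)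
    · obtain ⟨u, hu⟩ := hsurj ⟨z, hzF⟩
      have hφu : φ u = z := congrArg Subtype.val hu
      exact ⟨u, Subtype.ext hφu⟩
  have hψi : Function.Injective ψ := fun a b hab => hinj (congrArg Subtype.val hab)
  have hψo : IsOpenMap ψ := fun V hV => by
    have : ψ '' V = Subtype.val ⁻¹' (φ '' V) := by
      ext z
      simp [ψ, Subtype.ext_iff]
    rw [this]
    exact (hφ.isOpenMap V hV).preimage continuous_subtype_val
  have hψc : Continuous ψ := hφ.continuous.subtype_mk _
  exact ⟨F', Finset.card_filter_le _ _, hF',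
    ((Equiv.ofBijective ψ ⟨hψi, hψs⟩).toHomeomorphOfContinuousOpen hψc hψo).isCoveringMap, hψs⟩
end

section
/- In the hyperbolic plane ℍ², let Γ be a complete geodesic, π the nearest-point projection onto Γ, and let x be a point at distance s > 0 from Γ. Let H be the open half-plane bounded by the geodesic through x perpendicular to the segment from x to Γ and not containing Γ. Then the diameter of π(H) in Γ is at most 2·arccosh(coth(s)). -/
open UpperHalfPlane

/-- The inverse hyperbolic cosine. -/
noncomputable def arccosh (x : ℝ) : ℝ := Real.log (x + Real.sqrt (x ^ 2 - 1))

namespace Hyperboloid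

open Real

/-- The Lorentzian form of signature `(1, 2)` on `ℝ³`, in light-cone coordinates. -/
noncomputable def mink : (ℝ × ℝ × ℝ) →ₗ[ℝ] (ℝ × ℝ × ℝ) →ₗ[ℝ] ℝ :=
  LinearMap.mk₂ ℝ (fun v w => (v.1 * w.2.2 + w.1 * v.2.2) / 2 - v.2.1 * w.2.1)
    (by intros; simp; ring) (by intros; simp; ring)
    (by intros; simp; ring) (by intros; simp; ring)

lemma mink_apply (v w : ℝ × ℝ × ℝ) :
    mink v w = (v.1 * w.2.2 + w.1 * v.2.2) / 2 - v.2.1 * w.2.1 := rfl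

lemma mink_comm (v w : ℝ × ℝ × ℝ) : mink v w = mink w v := by
  simp only [mink_apply]; ring

/-- The embedding of the upper half-plane as a sheet of the hyperboloid `mink v v = 1`. -/
noncomputable def embed (z : ℍ) : ℝ × ℝ × ℝ :=
  (1 / z.im, z.re / z.im, (z.re ^ 2 + z.im ^ 2) / z.im)

lemma mink_embed (z w : ℍ) : mink (embed z) (embed w) = cosh (dist z w) := by
  have hz := z.im_pos.ne'
  have hw := w.im_pos.ne'
  rw [cosh_dist', mink_apply]
  simp only [embed]
  field_simp
  ring

lemma mink_embed_self (z : ℍ) : mink (embed z) (embed z) = 1 := by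
  simp [mink_embed]

/-- The orthogonal complement of a timelike vector is negative definite. -/
lemma mink_self_nonpos_of_orthogonal {P R : ℝ × ℝ × ℝ} (hP : 0 < mink P P)
    (h : mink R P = 0) : mink R R ≤ 0 ∧ (mink R R = 0 → R = 0) := by
  obtain ⟨p, q, r⟩ := P
  obtain ⟨u, v, w⟩ := R
  simp only [mink_apply] at *
  have h1 : q ^ 2 < p * r := by linarith
  have h2 : (p * w + r * u) = 2 * (q * v) := by linarith
  have h3 : (p * r) * (u * w) ≤ q ^ 2 * v ^ 2 := by
    have h4 : (p * w + r * u) ^ 2 = 4 * (q ^ 2 * v ^ 2) := by rw [h2]; ring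
    nlinarith [sq_nonneg (p * w - r * u)]
  have key : v ^ 2 ≤ u * w → v = 0 ∧ u * w = 0 := by
    intro hle
    have h6 : (p * r - q ^ 2) * (u * w) ≤ 0 := by nlinarith [sq_nonneg q]
    have h7 : u * w ≤ 0 := nonpos_of_mul_nonpos_right h6 (by linarith)
    have h8 : v ^ 2 = 0 := le_antisymm (by linarith) (sq_nonneg v)
    exact ⟨by simpa using h8, le_antisymm h7 (by nlinarith)⟩
  constructor
  · by_contra! hlt
    obtain ⟨hv, huw⟩ := key (by linarith)
    rw [hv] at hlt
    linarith
  · intro h0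
    obtain ⟨hv, huw⟩ := key (by linarith)
    have hpr : p * r ≠ 0 := by nlinarith [sq_nonneg q]
    obtain ⟨hp, hr⟩ := mul_ne_zero_iff.mp hpr
    rw [hv, mul_zero, mul_zero] at h2
    rcases mul_eq_zero.mp huw with hu | hw
    · simp_all
    · simp_all

/-- A unit-speed geodesic is a hyperbolic rotation in a Lorentzian plane. -/
lemma exists_tangent {γ : ℝ → ℍ} (hγ : Isometry γ) (t₀ : ℝ) :
    ∃ V, mink (embed (γ t₀)) V = 0 ∧ mink V V = -1 ∧
      ∀ t, embed (γ t) = cosh (t - t₀) • embed (γ t₀) + sinh (t - t₀) • V := by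
  have hsh : sinh 1 ≠ 0 := (sinh_pos_iff.mpr one_pos).ne'
  have hc : ∀ a b, mink (embed (γ a)) (embed (γ b)) = cosh (a - b) := by
    intro a b
    rw [mink_embed, hγ.dist_eq, Real.dist_eq, cosh_abs]
  set P := embed (γ t₀) with hP
  set Q := embed (γ (t₀ + 1)) with hQ
  have hPP : mink P P = 1 := mink_embed_self _
  have hQQ : mink Q Q = 1 := mink_embed_self _
  have hPQ : mink P Q = cosh 1 := by rw [hc, ← cosh_neg]; congr 1; ring
  have hQP : mink Q P = cosh 1 := by rw [mink_comm, hPQ]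
  have hsq := cosh_sq 1
  set V := (sinh 1)⁻¹ • (Q - cosh 1 • P) with hV
  have hPV : mink P V = 0 := by
    simp only [hV, map_smul, map_sub, smul_eq_mul, hPP, hPQ]; ring
  have hVP : mink V P = 0 := by rw [mink_comm, hPV]
  have hVV : mink V V = -1 := by
    simp only [hV, map_smul, map_sub, smul_eq_mul, LinearMap.smul_apply, LinearMap.sub_apply,
      hPP, hPQ, hQQ, hQP]
    field_simp
    linarith
  refine ⟨V, hPV, hVV, fun t => ?_⟩
  have hXX : mink (embed (γ t)) (embed (γ t)) = 1 := mink_embed_self _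
  have hXP : mink (embed (γ t)) P = cosh (t - t₀) := hc _ _
  have hPX : mink P (embed (γ t)) = cosh (t - t₀) := by rw [mink_comm, hXP]
  have hXV : mink (embed (γ t)) V = - sinh (t - t₀) := by
    have hXQ : mink (embed (γ t)) Q =
        cosh (t - t₀) * cosh 1 - sinh (t - t₀) * sinh 1 := by
      rw [hc, ← cosh_sub]; congr 1; ring
    simp only [hV, map_smul, map_sub, smul_eq_mul, hXP, hXQ]
    field_simp
    ring
  have hVX : mink V (embed (γ t)) = - sinh (t - t₀) := by rw [mink_comm, hXV]
  have h0 := mink_self_nonpos_of_orthogonal (P := P)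
    (R := embed (γ t) - (cosh (t - t₀) • P + sinh (t - t₀) • V)) (by rw [hPP]; norm_num) (by
      simp only [map_smul, map_sub, map_add, smul_eq_mul, LinearMap.smul_apply,
        LinearMap.sub_apply, LinearMap.add_apply, hPP, hVP, hXP]
      ring)
  refine sub_eq_zero.mp (h0.2 ?_)
  simp only [map_smul, map_sub, map_add, smul_eq_mul, LinearMap.smul_apply,
    LinearMap.sub_apply, LinearMap.add_apply, hPP, hVP, hPV, hVV, hXP, hXX, hXV, hPX, hVX]
  linarith [cosh_sq (t - t₀)]

lemma deriv_eq_zero_of_minimum {a b t₁ : ℝ}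
    (h : ∀ t, a * cosh t₁ + b * sinh t₁ ≤ a * cosh t + b * sinh t) :
    a * sinh t₁ + b * cosh t₁ = 0 := by
  have hd : HasDerivAt (fun t => a * cosh t + b * sinh t) (a * sinh t₁ + b * cosh t₁) t₁ :=
    ((hasDerivAt_cosh t₁).const_mul a).add ((hasDerivAt_sinh t₁).const_mul b)
  exact IsLocalMin.hasDerivAt_eq_zero (Filter.Eventually.of_forall h) hd

/-- First-order condition for the foot of a perpendicular to a geodesic. -/
lemma foot_condition {γ : ℝ → ℍ} {t₀ t₁ : ℝ} {V : ℝ × ℝ × ℝ}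
    (hV : ∀ t, embed (γ t) = cosh (t - t₀) • embed (γ t₀) + sinh (t - t₀) • V)
    {z : ℍ} (hz : ∀ t, dist z (γ t₁) ≤ dist z (γ t)) :
    mink (embed z) (embed (γ t₀)) * sinh (t₁ - t₀) + mink (embed z) V * cosh (t₁ - t₀) = 0 := by
  have hd : ∀ t, cosh (dist z (γ t)) =
      mink (embed z) (embed (γ t₀)) * cosh (t - t₀) + mink (embed z) V * sinh (t - t₀) := by
    intro t
    rw [← mink_embed, hV t]
    simp only [map_smul, map_add, smul_eq_mul]
    ring
  refine deriv_eq_zero_of_minimum fun t => ?_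
  have := hd (t + t₀)
  rw [add_sub_cancel_right] at this
  rw [← hd, ← this, cosh_le_cosh, abs_of_nonneg dist_nonneg, abs_of_nonneg dist_nonneg]
  exact hz _

lemma abs_le_arccosh {t C : ℝ} (h : cosh t ≤ C) : |t| ≤ arccosh C := by
  change |t| ≤ arcosh C
  rw [← arcosh_cosh (abs_nonneg t), cosh_abs]
  exact (arcosh_le_arcosh (cosh_pos t) ((cosh_pos t).trans_le h)).mpr h

/-- Central projection of the timelike cone onto the upper half-plane. -/
noncomputable def proj (v : ℝ × ℝ × ℝ) : ℍ :=
  ofComplex ⟨v.2.1 / v.1, √(mink v v) / v.1⟩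

lemma embed_proj {v : ℝ × ℝ × ℝ} (h₁ : 0 < v.1) (h₂ : 0 < mink v v) :
    embed (proj v) = (√(mink v v))⁻¹ • v := by
  have him : 0 < √(mink v v) / v.1 := by positivity
  have hs : 0 < √(mink v v) := by positivity
  have hsq : √(mink v v) ^ 2 = v.1 * v.2.2 - v.2.1 ^ 2 := by
    rw [sq_sqrt h₂.le, mink_apply]; ring
  rw [proj, ofComplex_apply_of_im_pos him]
  ext
  · simp [embed, UpperHalfPlane.im]
    field_simp
  · simp [embed, UpperHalfPlane.im, UpperHalfPlane.re]
    field_simp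
  · simp only [embed, UpperHalfPlane.im, UpperHalfPlane.re, div_pow, hsq, Prod.smul_snd,
      smul_eq_mul]
    field_simp
    ring

lemma proj_embed (z : ℍ) : proj (embed z) = z := by
  rw [proj, mink_embed_self, sqrt_one]
  have hz := z.im_pos.ne'
  convert ofComplex_apply z using 2
  apply Complex.ext
  · simp [embed]
    field_simp
  · simp [embed]

lemma continuousOn_proj : ContinuousOn proj {v | 0 < v.1 ∧ 0 < mink v v} := by
  rintro v ⟨h₁, h₂⟩
  have him : 0 < √(mink v v) / v.1 := by positivity
  have hm : Continuous fun v : ℝ × ℝ × ℝ => mink v v := by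
    simp only [mink_apply]; fun_prop
  have h : ContinuousAt (fun v : ℝ × ℝ × ℝ =>
      (Complex.equivRealProdCLM.symm (v.2.1 / v.1, √(mink v v) / v.1))) v := by
    refine Complex.equivRealProdCLM.symm.continuous.continuousAt.comp ?_
    exact ContinuousAt.prodMk (ContinuousAt.div (by fun_prop) (by fun_prop) h₁.ne')
      (ContinuousAt.div (by fun_prop) (by fun_prop) h₁.ne')
  have h' : ContinuousAt (fun v : ℝ × ℝ × ℝ =>
      (⟨v.2.1 / v.1, √(mink v v) / v.1⟩ : ℂ)) v := by
    convert h using 2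
    apply Complex.ext <;> simp
  have hc : ContinuousAt ofComplex (⟨v.2.1 / v.1, √(mink v v) / v.1⟩ : ℂ) :=
    (contMDiffAt_ofComplex (n := 0) him).continuousAt
  exact (ContinuousAt.comp (f := fun v : ℝ × ℝ × ℝ =>
    (⟨v.2.1 / v.1, √(mink v v) / v.1⟩ : ℂ)) hc h').continuousWithinAt

/-- An open half-plane is connected. -/
lemma isPreconnected_halfplane (M : ℝ × ℝ × ℝ) :
    IsPreconnected {z : ℍ | mink (embed z) M < 0} := by
  refine isPreconnected_of_forall_pair fun z hz w hw => ?_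
  have hcone : ∀ v ∈ segment ℝ (embed z) (embed w),
      (0 < v.1 ∧ 0 < mink v v) ∧ mink v M < 0 := by
    rintro v ⟨a, b, ha, hb, hab, rfl⟩
    have hz1 : 0 < (embed z).1 := one_div_pos.mpr z.im_pos
    have hw1 : 0 < (embed w).1 := one_div_pos.mpr w.im_pos
    have hzw : 0 < mink (embed z) (embed w) := by rw [mink_embed]; exact cosh_pos _
    have hwz : 0 < mink (embed w) (embed z) := by rw [mink_embed]; exact cosh_pos _
    simp only [Set.mem_ofPred_eq] at hz hw
    rcases ha.eq_or_lt with rfl | ha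
    · obtain rfl : b = 1 := by linarith
      simp [hw1, hw, mink_embed_self]
    refine ⟨⟨?_, ?_⟩, ?_⟩
    · simp only [Prod.fst_add, Prod.smul_fst, smul_eq_mul]
      positivity
    · simp only [map_smul, map_add, smul_eq_mul, LinearMap.smul_apply, LinearMap.add_apply,
        mink_embed_self]
      positivity
    · simp only [map_smul, map_add, smul_eq_mul, LinearMap.smul_apply, LinearMap.add_apply]
      nlinarith
  refine ⟨proj '' segment ℝ (embed z) (embed w), ?_, ⟨_, left_mem_segment _ _ _, proj_embed z⟩,
    ⟨_, right_mem_segment _ _ _, proj_embed w⟩, ?_⟩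
  · rintro _ ⟨v, hv, rfl⟩
    obtain ⟨⟨h₁, h₂⟩, h₃⟩ := hcone v hv
    simp only [Set.mem_ofPred_eq, embed_proj h₁ h₂, map_smul, LinearMap.smul_apply, smul_eq_mul]
    exact mul_neg_of_pos_of_neg (by positivity) h₃
  · exact (convex_segment _ _).isPreconnected.image _
      (continuousOn_proj.mono fun v hv => (hcone v hv).1)

/-- Bessel's inequality for an orthonormal frame with timelike vector `P`. -/
lemma bessel {P V N Z : ℝ × ℝ × ℝ} (hP : mink P P = 1) (hV : mink V V = -1)
    (hN : mink N N = -1) (hPV : mink P V = 0) (hPN : mink P N = 0) (hVN : mink V N = 0) :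
    mink Z Z + mink Z V ^ 2 + mink Z N ^ 2 ≤ mink Z P ^ 2 := by
  have hVP : mink V P = 0 := by rw [mink_comm, hPV]
  have hNP : mink N P = 0 := by rw [mink_comm, hPN]
  have hNV : mink N V = 0 := by rw [mink_comm, hVN]
  have h := (mink_self_nonpos_of_orthogonal (P := P)
    (R := Z - mink Z P • P + mink Z V • V + mink Z N • N) (by rw [hP]; norm_num) (by
      simp only [map_smul, map_sub, map_add, smul_eq_mul, LinearMap.smul_apply,
        LinearMap.sub_apply, LinearMap.add_apply, hP, hVP, hNP]
      ring)).1
  simp only [map_smul, map_sub, map_add, smul_eq_mul, LinearMap.smul_apply,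
    LinearMap.sub_apply, LinearMap.add_apply, hP, hVP, hNP, hPV, hNV, hV, hPN, hVN, hN,
    mink_comm P Z, mink_comm V Z, mink_comm N Z] at h
  linarith

lemma cosh_le_coth_of_critical {a b c s t : ℝ} (hs : 0 < s) (ha : 0 < a)
    (h : b ^ 2 + c ^ 2 ≤ a ^ 2) (hc : a * sinh s ≤ cosh s * c)
    (ht : a * sinh t + b * cosh t = 0) : cosh t ≤ cosh s / sinh s := by
  have hsh : 0 < sinh s := sinh_pos_iff.mpr hs
  have hc2 : (a * sinh s) ^ 2 ≤ (cosh s * c) ^ 2 := by gcongr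
  have hb2 : cosh s ^ 2 * b ^ 2 ≤ a ^ 2 := by
    nlinarith [cosh_sq s, mul_le_mul_of_nonneg_left h (sq_nonneg (cosh s))]
  have hbt : b ^ 2 * cosh t ^ 2 = a ^ 2 * sinh t ^ 2 := by
    linear_combination (b * cosh t - a * sinh t) * ht
  have h3 : cosh s ^ 2 * sinh t ^ 2 ≤ cosh t ^ 2 := by
    have h4 : a ^ 2 * (cosh s ^ 2 * sinh t ^ 2) ≤ a ^ 2 * cosh t ^ 2 := by
      calc a ^ 2 * (cosh s ^ 2 * sinh t ^ 2) = (cosh s ^ 2 * b ^ 2) * cosh t ^ 2 := by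
            linear_combination -cosh s ^ 2 * hbt
        _ ≤ _ := by gcongr
    exact le_of_mul_le_mul_left h4 (by positivity)
  rw [le_div_iff₀ hsh]
  refine (pow_le_pow_iff_left₀ (mul_pos (cosh_pos t) hsh).le (cosh_pos s).le two_ne_zero).mp ?_
  have h5 : (cosh s ^ 2 - 1) * cosh t ^ 2 ≤ cosh s ^ 2 := by
    linear_combination h3 + cosh s ^ 2 * cosh_sq t
  have h6 : sinh s ^ 2 = cosh s ^ 2 - 1 := by linarith [cosh_sq s]
  rw [mul_pow, h6]
  linarith

/-- A point separated from a geodesic by a perpendicular half-plane at distance `s` projects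
close to the foot of the common perpendicular. -/
lemma cosh_foot_le {Z A P V : ℝ × ℝ × ℝ} {s t : ℝ} (hs : 0 < s)
    (hZ : mink Z Z = 1) (hA : mink A A = 1) (hP : mink P P = 1) (hV : mink V V = -1)
    (hAP : mink A P = cosh s) (hPV : mink P V = 0) (hAV : mink A V = 0)
    (hZP : 0 < mink Z P) (hside : cosh s * mink Z A ≤ mink Z P)
    (ht : mink Z P * sinh t + mink Z V * cosh t = 0) :
    cosh t ≤ cosh s / sinh s := by
  have hsh : sinh s ≠ 0 := (sinh_pos_iff.mpr hs).ne'
  have hPA : mink P A = cosh s := by rw [mink_comm, hAP]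
  set N := (sinh s)⁻¹ • (cosh s • P - A) with hN
  have hNN : mink N N = -1 := by
    simp only [hN, map_smul, map_sub, smul_eq_mul, LinearMap.smul_apply, LinearMap.sub_apply,
      hA, hAP, hPA, hP]
    field_simp
    linarith [cosh_sq s]
  have hPN : mink P N = 0 := by
    simp only [hN, map_smul, map_sub, smul_eq_mul, hPA, hP]
    ring
  have hVN : mink V N = 0 := by
    rw [mink_comm]
    simp only [hN, map_smul, map_sub, smul_eq_mul, LinearMap.smul_apply, LinearMap.sub_apply,
      hAV, hPV]
    ring
  refine cosh_le_coth_of_critical (c := mink Z N) hs hZP ?_ ?_ ht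
  · linarith [bessel (Z := Z) hP hV hNN hPV hPN hVN]
  · have hZN : sinh s * mink Z N = cosh s * mink Z P - mink Z A := by
      simp only [hN, map_smul, map_sub, smul_eq_mul]
      field_simp
    refine le_of_mul_le_mul_left ?_ (sinh_pos_iff.mpr hs)
    linear_combination hside - cosh s * hZN - mink Z P * cosh_sq s

end Hyperboloid

open Hyperboloid

/-- In the hyperbolic plane, let Γ = range γ₁ be a complete geodesic, p the nearest-point
projection onto Γ, and x a point at distance s > 0 from Γ.  Let H be the open half-plane (a
connected component of the complement of the complete geodesic γ₂ through x which is perpendicular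
to the segment from x to Γ, i.e. along which x is the closest point to p x) not containing Γ.
Then the diameter of p(H) in Γ is at most 2·arccosh(coth(s)). -/
theorem projection_of_halfplane_bounded
    (γ₁ γ₂ : ℝ → UpperHalfPlane) (h₁ : Isometry γ₁) (h₂ : Isometry γ₂)
    (p : UpperHalfPlane → UpperHalfPlane)
    (hp : ∀ z, p z ∈ Set.range γ₁ ∧ ∀ w ∈ Set.range γ₁, dist z (p z) ≤ dist z w)
    (x : UpperHalfPlane) (s : ℝ) (hs : 0 < s) (hxΓ : dist x (p x) = s)
    (hx : γ₂ 0 = x)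
    (hperp : ∀ t : ℝ, dist (p x) x ≤ dist (p x) (γ₂ t))
    (H : Set UpperHalfPlane) (z₀ : UpperHalfPlane) (hz₀ : z₀ ∈ (Set.range γ₂)ᶜ)
    (hH : H = connectedComponentIn (Set.range γ₂)ᶜ z₀)
    (hdisj : Set.range γ₁ ∩ H = ∅) :
    ∀ z ∈ H, ∀ w ∈ H,
      dist (p z) (p w) ≤ 2 * arccosh (Real.cosh s / Real.sinh s) := by
  obtain ⟨t₀, ht₀⟩ := (hp x).1
  obtain ⟨V, hPV, hVV, hV⟩ := exists_tangent h₁ t₀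
  obtain ⟨U, hAU, -, hU⟩ := exists_tangent h₂ 0
  have hfoot : ∀ z t, γ₁ t = p z → mink (embed z) (embed (γ₁ t₀)) * Real.sinh (t - t₀) +
      mink (embed z) V * Real.cosh (t - t₀) = 0 := fun z t ht =>
    foot_condition hV fun r => ht ▸ (hp z).2 _ ⟨r, rfl⟩
  have hAV : mink (embed x) V = 0 := by simpa using hfoot x t₀ ht₀
  have hPU : mink (embed (p x)) U = 0 := by
    simpa using foot_condition hU (t₁ := 0) (z := p x) (by rw [hx]; exact hperp)
  have hAP : mink (embed x) (embed (p x)) = Real.cosh s := by rw [mink_embed, hxΓ]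
  have hPA : mink (embed (p x)) (embed x) = Real.cosh s := by rw [mink_comm, hAP]
  rw [hx] at hU hAU
  -- The linear form cutting out `γ₂`, negative on the side of `Γ`
  set M := embed (p x) - Real.cosh s • embed x with hM
  have hM_apply : ∀ v, mink v M = mink v (embed (p x)) - Real.cosh s * mink v (embed x) := by
    intro v
    simp [hM]
  have hside : ∀ z ∈ H, Real.cosh s * mink (embed z) (embed x) ≤ mink (embed z) (embed (p x)) := by
    intro z hz
    by_contra! hlt
    have hzM : mink (embed z) M < 0 := by rw [hM_apply]; linarith
    have hpM : mink (embed (p x)) M < 0 := by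
      rw [hM_apply, mink_embed_self, hPA]
      nlinarith [Real.one_lt_cosh.mpr hs.ne']
    have hγM : {y | mink (embed y) M < 0} ⊆ (Set.range γ₂)ᶜ := by
      rintro _ hy ⟨t, rfl⟩
      rw [Set.mem_ofPred_eq, hU t, hM_apply] at hy
      simp [hAP, mink_embed_self, mink_comm U, hPU, hAU] at hy
      linarith
    have hmem := (isPreconnected_halfplane M).subset_connectedComponentIn hzM hγM hpM
    rw [hH] at hz
    rw [← connectedComponentIn_eq hz, ← hH] at hmem
    exact hdisj.subset (Set.mem_inter (hp x).1 hmem)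
  have hdist : ∀ z ∈ H, ∀ t, γ₁ t = p z → |t - t₀| ≤ arccosh (Real.cosh s / Real.sinh s) := by
    intro z hz t ht
    refine abs_le_arccosh (cosh_foot_le hs (mink_embed_self z) (mink_embed_self x)
      (mink_embed_self (p x)) hVV hAP (ht₀ ▸ hPV) hAV ?_ (hside z hz) (ht₀ ▸ hfoot z t ht))
    rw [mink_embed]
    exact Real.cosh_pos _
  intro z hz w hw
  obtain ⟨t, ht⟩ := (hp z).1
  obtain ⟨u, hu⟩ := (hp w).1
  rw [← ht, ← hu, h₁.dist_eq, two_mul]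
  refine (dist_triangle_right t u t₀).trans (add_le_add ?_ ?_)
  · exact hdist z hz t ht
  · exact hdist w hw u hu
end
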